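/- Proposition 21 (freeness of the formal Brieskorn lattice): the formal Brieskorn lattice H = A/M is a free ℂ[[s]]-module of rank μ, i.e. H is isomorphic as a ℂ[[s]]-module to ℂ[[s]]^μ, where μ = dim_ℂ (R/J(f)) is the Milnor number of f. -/

import Mathlib

noncomputable section

open scoped Pointwise

/-- The formal partial derivative `∂ᵢ` with respect to the `i`th variable, determined by
`coeff α (∂ᵢ g) = (α i + 1) • coeff (α + eᵢ) g`. -/
def pd {σ : Type*} (i : σ) (g : MvPowerSeries σ ℂ) : MvPowerSeries σ ℂ :=
  fun α => ((α i : ℂ) + 1) * MvPowerSeries.coeff (α + Finsupp.single i 1) g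

lemma coeff_pd {σ : Type*} (i : σ) (g : MvPowerSeries σ ℂ) (α : σ →₀ ℕ) :
    MvPowerSeries.coeff α (pd i g) =
      ((α i : ℂ) + 1) * MvPowerSeries.coeff (α + Finsupp.single i 1) g := rfl

variable (n : ℕ)

/-- `R = ℂ[[x₁,…,xₙ]]`. -/
abbrev R' := MvPowerSeries (Fin n) ℂ

/-- `A = ℂ[[s,x₁,…,xₙ]]`, where `s` is the 0th variable and `xᵢ` is the variable
of index `i` (`1 ≤ i ≤ n`). -/
abbrev A' := MvPowerSeries (Fin (n + 1)) ℂ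

/-- The variable `s` of `A`. -/
def sv : A' n := MvPowerSeries.X 0

/-- Forget the `s`-exponent of a multi-index of `A`. -/
def tailF (β : Fin (n + 1) →₀ ℕ) : Fin n →₀ ℕ :=
  Finsupp.equivFunOnFinite.symm fun i => β i.succ

/-- The inclusion `R ⊆ A` as the subring of series not involving `s`. -/
def inclR (g : R' n) : A' n :=
  fun β => if β 0 = 0 then MvPowerSeries.coeff (tailF n β) g else 0

/-- The inclusion `ℂ[[s]] ⊆ A` as the subring of series in `s` alone. -/
def toA (p : PowerSeries ℂ) : A' n :=
  fun β => if tailF n β = 0 then PowerSeries.coeff (β 0) p else 0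

lemma coeff_inclR (g : R' n) (β : Fin (n + 1) →₀ ℕ) :
    MvPowerSeries.coeff β (inclR n g) =
      if β 0 = 0 then MvPowerSeries.coeff (tailF n β) g else 0 := rfl

/-- The `ℂ[[s]]`-linear operator `Fᵢ(g) = ∂ᵢ(f)·g − s·∂ᵢ(g)` on `A`. -/
def FF (f : R' n) (i : Fin n) (g : A' n) : A' n :=
  inclR n (pd i f) * g - sv n * pd i.succ g

/-- `M = range F₁ + ⋯ + range Fₙ`, so that `H = A/M` is the formal Brieskorn lattice. -/
def Mset (f : R' n) : Set (A' n) :=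
  {a | ∃ q : Fin n → A' n, a = ∑ i, FF n f i (q i)}

/-- The Jacobian ideal `J(f) = ⟨∂₁f,…,∂ₙf⟩` of `R`. -/
def Jf (f : R' n) : Ideal (R' n) :=
  Ideal.span (Set.range fun i : Fin n => pd i f)

/-- The maximal ideal `⟨x₁,…,xₙ⟩` of `R = ℂ[[x₁,…,xₙ]]`. -/
def mx : Ideal (R' n) :=
  Ideal.span (Set.range (MvPowerSeries.X : Fin n → R' n))

/-- The ideal `J(f)·A` of `A` generated by `∂₁(f),…,∂ₙ(f)`. -/
def JA (f : R' n) : Ideal (A' n) :=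
  Ideal.span (Set.range fun i : Fin n => inclR n (pd i f))

/-- The ideal `⟨x₁,…,xₙ⟩·A` of `A` generated by the variables `x₁,…,xₙ` (not `s`). -/
def XA : Ideal (A' n) :=
  Ideal.span (Set.range fun i : Fin n => (MvPowerSeries.X i.succ : A' n))

lemma pd_add {σ : Type*} (i : σ) (a b : MvPowerSeries σ ℂ) :
    pd i (a + b) = pd i a + pd i b := by
  ext α; simp [coeff_pd, mul_add]

lemma pd_smul {σ : Type*} (i : σ) (c : ℂ) (a : MvPowerSeries σ ℂ) :
    pd i (c • a) = c • pd i a := by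
  ext α; simp [coeff_pd]; ring

lemma FF_add (f : R' n) (i : Fin n) (a b : A' n) :
    FF n f i (a + b) = FF n f i a + FF n f i b := by
  simp only [FF, pd_add, mul_add]; ring

lemma FF_smul (f : R' n) (i : Fin n) (c : ℂ) (a : A' n) :
    FF n f i (c • a) = c • FF n f i a := by
  simp only [FF, pd_smul, Algebra.mul_smul_comm, smul_sub]

lemma FF_zero (f : R' n) (i : Fin n) : FF n f i 0 = 0 := by
  simpa using FF_smul n f i 0 0

/-- `M` as a `ℂ`-submodule of `A`. -/
def Msub (f : R' n) : Submodule ℂ (A' n) where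
  carrier := Mset n f
  zero_mem' := ⟨0, by simp [FF_zero]⟩
  add_mem' := by
    rintro a b ⟨q, rfl⟩ ⟨q', rfl⟩
    exact ⟨q + q', by simp [FF_add, Finset.sum_add_distrib]⟩
  smul_mem' := by
    rintro c a ⟨q, rfl⟩
    exact ⟨c • q, by simp [FF_smul, Finset.smul_sum]⟩

/-- The inclusion `R ⊆ A` as a `ℂ`-linear map. -/
def inclL : R' n →ₗ[ℂ] A' n where
  toFun := inclR n
  map_add' a b := by
    ext β; simp only [coeff_inclR, map_add]; split <;> simp
  map_smul' c a := by
    ext β; simp only [coeff_inclR, map_smul, RingHom.id_apply]; split <;> simp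

/-!
Write `s` for the variable `X` of `R⟦X⟧`. The operators `F_j = ∂_j f - s ∂_j` commute, and
`H / sH = R / J(f)`. Since `J(f)` contains a power of every variable, it has depth equal to the
number of its generators, so the Koszul complex of the `∂_j f` is exact in degree one: every
relation `∑ ∂_j f q_j = 0` has the form `q_j = ∑_k ∂_k f a_kj` with `a` alternating.

If `s g = ∑ F_j q_j`, the constant coefficients of the `q_j` satisfy such a relation. Writing
`∂_k f a_kj = F_k a_kj + s ∂_k a_kj`, the terms `∑ F_j F_k a_kj` cancel because the `F_j` commute,
and dividing what is left by `s` shows `g ∈ M`. So `H` has no `s`-torsion, and a basis of `R / J(f)`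
lifts to one of `H`: independence and generation are both checked one power of `s` at a time.
-/

section Koszul

variable {R E M N : Type*} [CommRing R] [AddCommGroup E] [Module R E]
  [AddCommGroup M] [Module R M] [AddCommGroup N] [Module R N]

-- Contraction with `e` is an antiderivation: `ι_e (ℓ ∧ u) = ℓ e • u - ℓ ∧ ι_e u`.
theorem curryLeft_alternatizeUncurryFin_smulRight {p : ℕ} (ℓ : Module.Dual R E) (e : E)
    (u : E [⋀^Fin (p + 1)]→ₗ[R] M) :
    (AlternatingMap.alternatizeUncurryFin (ℓ.smulRight u)).curryLeft e =
      ℓ e • u - AlternatingMap.alternatizeUncurryFin (ℓ.smulRight (u.curryLeft e)) := by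
  ext v
  have removeNth_succ_vecCons (i : Fin (p + 1)) :
      i.succ.removeNth (Matrix.vecCons e v) = Matrix.vecCons e (i.removeNth v) := by
    funext j
    refine Fin.cases ?_ (fun j => ?_) j <;> simp [Fin.removeNth]
  simp [AlternatingMap.alternatizeUncurryFin_apply, Fin.sum_univ_succ, removeNth_succ_vecCons,
    pow_succ, sub_eq_add_neg]

theorem alternatingMap_eq_zero_of_finrank_lt [Nontrivial R] [Module.Free R E] [Module.Finite R E]
    {p : ℕ} (hp : Module.finrank R E < p) (u : E [⋀^Fin p]→ₗ[R] M) : u = 0 :=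
  (Module.finBasis R E).ext_alternating fun v hv =>
    absurd (by simpa using Fintype.card_le_of_injective v hv) hp.not_ge

theorem exists_compAlternatingMap_eq [Module.Free R E] {p : ℕ} (g : N →ₗ[R] M)
    (u : E [⋀^Fin p]→ₗ[R] M) (hu : ∀ v, u v ∈ LinearMap.range g) :
    ∃ t : E [⋀^Fin p]→ₗ[R] N, g.compAlternatingMap t = u := by
  obtain ⟨T, hT⟩ := Module.projective_lifting_property g.rangeRestrict
    (exteriorPower.alternatingMapLinearEquiv (u.codRestrict _ hu)) g.surjective_rangeRestrict
  refine ⟨T.compAlternatingMap (exteriorPower.ιMulti R p), ?_⟩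
  ext v
  simpa using congrArg Subtype.val (LinearMap.congr_fun hT (exteriorPower.ιMulti R p v))

-- The `M`-valued alternating maps on `E` with the differential `u ↦ u.curryLeft e` form the Koszul
-- complex of the coordinates of `e`, so this is depth sensitivity of that complex.
open RingTheory.Sequence in
theorem exists_curryLeft_eq_of_isWeaklyRegular [Nontrivial R] [Module.Free R E]
    [Module.Finite R E] (e : E) {rs : List R} (hrs : ∀ r ∈ rs, ∃ ℓ : Module.Dual R E, ℓ e = r)
    (hreg : IsWeaklyRegular M rs) {p : ℕ} (hp : Module.finrank R E < p + 1 + rs.length)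
    (u : E [⋀^Fin (p + 1)]→ₗ[R] M) (hu : u.curryLeft e = 0) :
    ∃ t : E [⋀^Fin (p + 2)]→ₗ[R] M, t.curryLeft e = u := by
  induction rs generalizing M p with
  | nil => exact ⟨0, by simp [alternatingMap_eq_zero_of_finrank_lt hp u]⟩
  | cons a rs ih =>
    obtain ⟨ha, hreg⟩ := (isWeaklyRegular_cons_iff M a rs).1 hreg
    obtain ⟨ℓ, rfl⟩ := hrs a List.mem_cons_self
    let π := (ℓ e • (⊤ : Submodule R M)).mkQ
    have hπ (x : M) : π x = 0 ↔ x ∈ LinearMap.range (LinearMap.lsmul R M (ℓ e)) := by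
      simp [π, Submodule.mem_smul_pointwise_iff_exists]
    let w := AlternatingMap.alternatizeUncurryFin (ℓ.smulRight u)
    have hw : w.curryLeft e = ℓ e • u := by
      have smulRight_zero : ℓ.smulRight (0 : E [⋀^Fin p]→ₗ[R] M) = 0 := by ext; simp
      rw [curryLeft_alternatizeUncurryFin_smulRight, hu, smulRight_zero,
        ← AlternatingMap.alternatizeUncurryFinLM_apply, map_zero, sub_zero]
    have w_cycle : (π.compAlternatingMap w).curryLeft e = 0 := by
      rw [AlternatingMap.curryLeft_compAlternatingMap, hw]
      ext x
      exact (hπ _).2 ⟨u x, rfl⟩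
    obtain ⟨v', hv'⟩ := ih (fun r hr => hrs r (List.mem_cons_of_mem _ hr)) hreg
      (by rw [List.length_cons] at hp; omega) (π.compAlternatingMap w) w_cycle
    obtain ⟨v, rfl⟩ := exists_compAlternatingMap_eq π v' fun x => Submodule.mkQ_surjective _ _
    obtain ⟨t, ht⟩ := exists_compAlternatingMap_eq (LinearMap.lsmul R M (ℓ e)) (w - v.curryLeft e)
      fun x => (hπ _).1 <| by
        rw [AlternatingMap.sub_apply, map_sub, sub_eq_zero]
        exact DFunLike.congr_fun hv'.symm x
    refine ⟨t, AlternatingMap.ext fun x => ha ?_⟩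
    calc ℓ e • t.curryLeft e x = (w - v.curryLeft e).curryLeft e x := by rw [← ht]; rfl
      _ = w.curryLeft e x - (v.curryLeft e).curryLeft e x := rfl
      _ = ℓ e • u x := by rw [hw, AlternatingMap.curryLeft_same]; simp

/-- Every linear relation between the elements `g j` of a commutative ring is a combination of the
trivial relations `g k * g j - g j * g k = 0`. Equivalently, the first Koszul homology of `g`
vanishes; the coefficients of the trivial relations are encoded as an alternating matrix `a`. -/
def OnlyKoszulSyzygies {ι : Type*} [Fintype ι] (g : ι → R) : Prop :=
  ∀ q : ι → R, ∑ j, g j * q j = 0 →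
    ∃ a : ι → ι → R, (∀ i, a i i = 0) ∧ (∀ i j, a i j = -a j i) ∧ ∀ j, q j = ∑ k, g k * a k j

open RingTheory.Sequence in
theorem onlyKoszulSyzygies_of_isWeaklyRegular {ι : Type*} [Fintype ι] [Nontrivial R] {g : ι → R}
    {rs : List R} (hrs : ∀ r ∈ rs, r ∈ Ideal.span (Set.range g)) (hreg : IsWeaklyRegular R rs)
    (hlen : Fintype.card ι ≤ rs.length) : OnlyKoszulSyzygies g := by
  classical
  intro q hq
  let u : (ι → R) [⋀^Fin 1]→ₗ[R] R :=
    AlternatingMap.ofSubsingleton R (ι → R) R 0 (Fintype.linearCombination R q)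
  have u_cycle : u.curryLeft g = 0 := by
    ext v
    simpa [u, Fintype.linearCombination_apply] using hq
  have hrs' : ∀ r ∈ rs, ∃ ℓ : Module.Dual R (ι → R), ℓ g = r := fun r hr => by
    obtain ⟨c, rfl⟩ := Ideal.mem_span_range_iff_exists_fun.1 (hrs r hr)
    exact ⟨Fintype.linearCombination R c, by simp [Fintype.linearCombination_apply, mul_comm]⟩
  obtain ⟨t, ht⟩ := exists_curryLeft_eq_of_isWeaklyRegular g hrs' hreg
    (by rw [Module.finrank_fintype_fun_eq_card]; omega) u u_cycle
  refine ⟨fun i j => t ![Pi.single i 1, Pi.single j 1], fun i => ?_, fun i j => ?_, fun j => ?_⟩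
  · exact t.map_eq_zero_of_eq _ (i := 0) (j := 1) rfl Fin.zero_ne_one
  · simpa using t.map_swap ![Pi.single j 1, Pi.single i 1] Fin.zero_ne_one
  · calc q j = u ![Pi.single j 1] := by simp [u, Fintype.linearCombination_apply, Pi.single_apply]
      _ = t ![g, Pi.single j 1] := by rw [← ht]; rfl
      _ = t ![∑ k, g k • Pi.single k 1, Pi.single j 1] := by rw [← pi_eq_sum_univ']
      _ = ∑ k, t ![g k • Pi.single k 1, Pi.single j 1] := by
        simpa only [Matrix.vecCons, Fin.update_cons_zero] using
          t.map_update_sum .univ 0 (fun k => g k • Pi.single k 1) ![0, Pi.single j 1]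
      _ = ∑ k, g k * t ![Pi.single k 1, Pi.single j 1] := by
        simp_rw [t.map_vecCons_smul, smul_eq_mul]

end Koszul

section PowersOfVariables

open MvPowerSeries RingTheory.Sequence

variable {σ K : Type*} [CommRing K]

theorem mem_span_X_pow_iff (e : σ → ℕ) (s : Finset σ) (z : MvPowerSeries σ K) :
    z ∈ Ideal.span ((fun i => (X i : MvPowerSeries σ K) ^ e i) '' s) ↔
      ∀ α : σ →₀ ℕ, (∀ i ∈ s, α i < e i) → coeff α z = 0 := by
  classical
  induction s using Finset.induction_on generalizing z with
  | empty => simp [MvPowerSeries.ext_iff]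
  | insert k s _ ih =>
    rw [Finset.coe_insert, Set.image_insert_eq, Ideal.mem_span_insert]
    constructor
    · rintro ⟨c, y, hy, rfl⟩ α hα
      rw [map_add, (ih y).1 hy α fun i hi => hα i (Finset.mem_insert_of_mem hi), add_zero]
      exact X_pow_dvd_iff.1 (Dvd.intro_left c rfl) α (hα k (Finset.mem_insert_self k s))
    · intro hz
      let y : MvPowerSeries σ K := fun α => if α k < e k then coeff α z else 0
      have coeff_y (α : σ →₀ ℕ) : coeff α y = if α k < e k then coeff α z else 0 := rfl
      obtain ⟨c, hc⟩ : X k ^ e k ∣ z - y :=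
        X_pow_dvd_iff.2 fun α hα => by rw [map_sub, coeff_y, if_pos hα, sub_self]
      refine ⟨c, y, (ih y).2 fun α hα => ?_, by linear_combination hc⟩
      rw [coeff_y, ite_eq_right_iff]
      exact fun hαk => hz α ((Finset.forall_mem_insert _ _ _).2 ⟨hαk, hα⟩)

theorem isWeaklyRegular_map_X_pow (e : σ → ℕ) {l : List σ} (hl : l.Nodup) :
    IsWeaklyRegular (MvPowerSeries σ K) (l.map fun i => (X i : MvPowerSeries σ K) ^ e i) := by
  classical
  induction l using List.reverseRecOn with
  | nil => exact IsWeaklyRegular.nil _ _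
  | append_singleton l k ih =>
    obtain ⟨hl, hk⟩ : l.Nodup ∧ k ∉ l := by
      simpa [List.nodup_append, eq_comm, imp_not_comm] using hl
    have ofList_eq : Ideal.ofList (l.map fun i => (X i : MvPowerSeries σ K) ^ e i) =
        Ideal.span ((fun i => (X i : MvPowerSeries σ K) ^ e i) '' l.toFinset) := by
      simp [Ideal.ofList, Set.image]
    rw [List.map_append, isWeaklyRegular_append_iff, List.map_singleton,
      isWeaklyRegular_singleton_iff, smul_eq_mul, Ideal.mul_top, ofList_eq]
    refine ⟨ih hl, (isSMulRegular_quotient_iff_mem_of_smul_mem _ _).2 fun z hz => ?_⟩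
    rw [smul_eq_mul, mem_span_X_pow_iff] at hz
    refine (mem_span_X_pow_iff e _ z).2 fun α hα => ?_
    have hα' : ∀ i ∈ l.toFinset, (Finsupp.single k (e k) + α) i < e i := fun i hi => by
      have hki : k ≠ i := by rintro rfl; exact hk (List.mem_toFinset.1 hi)
      simpa [Finsupp.single_apply, hki] using hα i hi
    simpa [X_pow_eq, coeff_add_monomial_mul] using hz _ hα'

theorem onlyKoszulSyzygies_of_X_mem_radical [Fintype σ] [Nontrivial K]
    {f : σ → MvPowerSeries σ K} (hf : ∀ i, X i ∈ (Ideal.span (Set.range f)).radical) :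
    OnlyKoszulSyzygies f := by
  choose e he using hf
  refine onlyKoszulSyzygies_of_isWeaklyRegular ?_
    (isWeaklyRegular_map_X_pow e (Finset.nodup_toList Finset.univ)) (by simp)
  simpa using he

theorem finite_quotient_of_X_mem_radical [Finite σ] {J : Ideal (MvPowerSeries σ K)}
    (hJ : ∀ i, X i ∈ J.radical) : Module.Finite K (MvPowerSeries σ K ⧸ J) := by
  classical
  have := Fintype.ofFinite σ
  choose e he using hJ
  let box : Finset (σ →₀ ℕ) := Finset.Iic (Finsupp.equivFunOnFinite.symm e)
  have sub_box_mem (z : MvPowerSeries σ K) : z - ∑ α ∈ box, monomial α (coeff α z) ∈ J := by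
    refine Ideal.span_le.2 ?_ <| (mem_span_X_pow_iff e Finset.univ _).2 fun α hα => ?_
    · rintro _ ⟨i, -, rfl⟩
      exact he i
    · have : α ≤ Finsupp.equivFunOnFinite.symm e := fun i => (hα i (Finset.mem_univ i)).le
      simp [box, coeff_monomial, this]
  let boxSum : (box → K) →ₗ[K] MvPowerSeries σ K ⧸ J :=
    (Ideal.Quotient.mkₐ K J).toLinearMap ∘ₗ ∑ α, monomial α.1 ∘ₗ LinearMap.proj α
  refine Module.Finite.of_surjective boxSum fun y => ?_
  obtain ⟨z, rfl⟩ := Ideal.Quotient.mk_surjective y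
  refine ⟨fun α => coeff α.1 z, (Ideal.Quotient.eq.2 ?_).symm⟩
  simpa [Finset.sum_attach _ fun α => monomial α (coeff α z)] using sub_box_mem z

theorem pderiv_comm (i j : σ) (g : MvPowerSeries σ K) :
    pderiv K i (pderiv K j g) = pderiv K j (pderiv K i g) := by
  classical
  obtain rfl | hij := eq_or_ne i j
  · rfl
  ext α
  simp only [coeff_pderiv, Finsupp.add_apply, Finsupp.single_eq_of_ne hij,
    Finsupp.single_eq_of_ne hij.symm, add_zero, add_right_comm α]
  ring

end PowersOfVariables

theorem sum_sum_eq_zero_of_alternating {ι G : Type*} [Fintype ι] [AddCommGroup G]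
    {c : ι → ι → G} (h_diag : ∀ i, c i i = 0) (h_swap : ∀ i j, c i j = -c j i) :
    ∑ i, ∑ j, c i j = 0 := by
  classical
  rw [← Fintype.sum_prod_type']
  refine Finset.sum_involution (fun x _ => x.swap) (fun x _ => ?_) (fun x _ hx => ?_)
    (fun _ _ => Finset.mem_univ _) fun x _ => x.swap_swap
  · rw [h_swap x.1 x.2]
    simp
  · rintro h
    obtain ⟨i, j⟩ := x
    obtain rfl : j = i := congrArg Prod.fst h
    exact hx (h_diag j)

section BrieskornLattice

open PowerSeries

variable {K R : Type*} [CommRing K] [CommRing R] [Algebra K R]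

/-- The `K⟦X⟧`-linear extension of a `K`-linear endomorphism of `R` to `R⟦X⟧`, acting on each
coefficient; it extends the derivations `∂ᵢ` of `R` to `R⟦X⟧`. -/
def coeffwise (L : R →ₗ[K] R) : R⟦X⟧ →ₗ[K⟦X⟧] R⟦X⟧ where
  toFun g := PowerSeries.mk fun k => L (coeff k g)
  map_add' g h := by ext; simp
  map_smul' c g := by
    ext k
    simp only [Algebra.smul_def c, algebraMap_apply'', coeff_mk, coeff_mul, coeff_map,
      ← Algebra.smul_def, map_sum, map_smul, RingHom.id_apply]

@[simp]
theorem coeff_coeffwise (L : R →ₗ[K] R) (k : ℕ) (g : R⟦X⟧) :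
    coeff k (coeffwise L g) = L (coeff k g) :=
  coeff_mk k fun k => L (coeff k g)

theorem X_smul_eq_X_mul (g : R⟦X⟧) : (X : K⟦X⟧) • g = X * g := by
  rw [Algebra.smul_def, algebraMap_apply'', map_X]

theorem coeff_smul_C (c : K⟦X⟧) (b : R) (k : ℕ) : coeff k (c • C b) = coeff k c • b := by
  rw [Algebra.smul_def c, algebraMap_apply'', coeff_mul_C, coeff_map, ← Algebra.smul_def]

/-- The operator `F(g) = D(f) g - s D(g)` on `R⟦X⟧` attached to a derivation `D` of `R`, with the
power series variable `X` in the role of `s`. -/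
def twistedDeriv (D : Derivation K R R) (f : R) : R⟦X⟧ →ₗ[K⟦X⟧] R⟦X⟧ :=
  LinearMap.mulLeft K⟦X⟧ (C (D f)) - (X : K⟦X⟧) • coeffwise (D : R →ₗ[K] R)

theorem twistedDeriv_apply (D : Derivation K R R) (f : R) (g : R⟦X⟧) :
    twistedDeriv D f g = C (D f) * g - X * coeffwise (D : R →ₗ[K] R) g := by
  simp [twistedDeriv, X_smul_eq_X_mul]

theorem coeff_zero_twistedDeriv (D : Derivation K R R) (f : R) (g : R⟦X⟧) :
    coeff 0 (twistedDeriv D f g) = D f * coeff 0 g := by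
  simp [twistedDeriv_apply]

theorem coeff_succ_twistedDeriv (D : Derivation K R R) (f : R) (g : R⟦X⟧) (k : ℕ) :
    coeff (k + 1) (twistedDeriv D f g) = D f * coeff (k + 1) g - D (coeff k g) := by
  simp [twistedDeriv_apply, coeff_succ_X_mul]

theorem twistedDeriv_comm {D₁ D₂ : Derivation K R R} (hD : ∀ x, D₁ (D₂ x) = D₂ (D₁ x)) (f : R)
    (g : R⟦X⟧) :
    twistedDeriv D₁ f (twistedDeriv D₂ f g) = twistedDeriv D₂ f (twistedDeriv D₁ f g) := by
  ext (_ | _ | k) <;>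
    simp only [coeff_zero_twistedDeriv, coeff_succ_twistedDeriv, map_sub, Derivation.leibniz,
      smul_eq_mul, hD, zero_add] <;> ring

theorem C_mul_eq_twistedDeriv_add (D : Derivation K R R) (f a : R) :
    C (D f * a) = twistedDeriv D f (C a) + (X : K⟦X⟧) • C (D a) := by
  have coeffwise_C : coeffwise (D : R →ₗ[K] R) (C a) = C (D a) := by
    ext k
    simp [coeff_C, apply_ite D]
  rw [twistedDeriv_apply, coeffwise_C, X_smul_eq_X_mul, map_mul, sub_add_cancel]

variable {ι : Type*}

/-- The Jacobian ideal `J(f)` of `f` with respect to a family `D` of derivations, generated by the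
derivatives `D i f`. -/
def jacobianIdeal (D : ι → Derivation K R R) (f : R) : Ideal R :=
  Ideal.span (Set.range fun i => D i f)

/-- The submodule `M = ∑ i, range F_i` of `R⟦X⟧`, where `F_i` is the twisted derivative along
`D i`. -/
def brieskornSubmodule (D : ι → Derivation K R R) (f : R) : Submodule K⟦X⟧ R⟦X⟧ :=
  ⨆ i, LinearMap.range (twistedDeriv (D i) f)

/-- The formal Brieskorn lattice `H` of `f` with respect to a family `D` of derivations of `R`. The
series ring in `s` and the variables of `R` is encoded as `R⟦X⟧`, with `s = X`. -/
abbrev BrieskornLattice (D : ι → Derivation K R R) (f : R) : Type _ :=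
  R⟦X⟧ ⧸ brieskornSubmodule D f

variable {D : ι → Derivation K R R} {f : R}

theorem coeff_zero_mem_jacobianIdeal {g : R⟦X⟧} (hg : g ∈ brieskornSubmodule D f) :
    coeff 0 g ∈ jacobianIdeal D f := by
  refine Submodule.iSup_induction _ (motive := fun g => coeff 0 g ∈ jacobianIdeal D f) hg
    ?_ (by simp) fun g h hg hh => by simpa only [map_add] using add_mem hg hh
  rintro j _ ⟨q, rfl⟩
  rw [coeff_zero_twistedDeriv]
  exact Ideal.mul_mem_right _ _ (Ideal.subset_span ⟨j, rfl⟩)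

theorem mem_brieskornSubmodule_iff [Fintype ι] {g : R⟦X⟧} :
    g ∈ brieskornSubmodule D f ↔ ∃ q : ι → R⟦X⟧, ∑ j, twistedDeriv (D j) f (q j) = g := by
  constructor
  · intro hg
    obtain ⟨μ, rfl⟩ := (Submodule.mem_iSup_finset_iff_exists_sum (s := Finset.univ) _ g).1 <| by
      simpa [brieskornSubmodule] using hg
    choose q hq using fun j => (μ j).2
    exact ⟨q, by simp [hq]⟩
  · rintro ⟨q, rfl⟩
    exact Submodule.sum_mem _ fun j _ => Submodule.mem_iSup_of_mem j ⟨q j, rfl⟩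

theorem mem_brieskornSubmodule_of_X_smul_mem [Fintype ι]
    (hD : ∀ i j x, D i (D j x) = D j (D i x)) (hf : OnlyKoszulSyzygies fun j => D j f)
    {g : R⟦X⟧} (hg : (X : K⟦X⟧) • g ∈ brieskornSubmodule D f) : g ∈ brieskornSubmodule D f := by
  obtain ⟨q, hq⟩ := mem_brieskornSubmodule_iff.1 hg
  obtain ⟨a, a_diag, a_swap, ha⟩ := hf (fun j => coeff 0 (q j)) <| by
    simpa [coeff_zero_twistedDeriv, X_smul_eq_X_mul] using congrArg (coeff 0) hq
  have exists_remainder (j : ι) : ∃ r : R⟦X⟧,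
      q j = ∑ k, twistedDeriv (D k) f (C (a k j)) + (X : K⟦X⟧) • r := by
    refine ⟨PowerSeries.mk (fun k => coeff (k + 1) (q j)) + ∑ k, C (D k (a k j)), ?_⟩
    conv_lhs => rw [eq_X_mul_shift_add_const (q j), ← coeff_zero_eq_constantCoeff_apply, ha,
      map_sum]
    simp only [C_mul_eq_twistedDeriv_add, Finset.sum_add_distrib, smul_add, Finset.smul_sum,
      X_smul_eq_X_mul]
    ring
  choose r hr using exists_remainder
  have double_sum : ∑ j, ∑ k, twistedDeriv (D j) f (twistedDeriv (D k) f (C (a k j))) = 0 :=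
    sum_sum_eq_zero_of_alternating (fun j => by simp [a_diag]) fun j k => by
      rw [twistedDeriv_comm (hD j k), a_swap k j]
      simp only [map_neg]
  refine mem_brieskornSubmodule_iff.2 ⟨r, X_mul_cancel ?_⟩
  simp_rw [← X_smul_eq_X_mul (K := K), ← hq, hr, map_add, map_sum, map_smul,
    Finset.sum_add_distrib, double_sum, zero_add, Finset.smul_sum]

variable {κ : Type*} {b : κ → R}

theorem coeff_zero_eq_zero_of_sum_smul_C_mem
    (hb : LinearIndependent K fun i => Ideal.Quotient.mk (jacobianIdeal D f) (b i))
    {t : Finset κ} {c : κ → K⟦X⟧} (hc : ∑ i ∈ t, c i • C (b i) ∈ brieskornSubmodule D f) :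
    ∀ i ∈ t, coeff 0 (c i) = 0 := by
  refine linearIndependent_iff'.1 hb t (fun i => coeff 0 (c i)) ?_
  have := Ideal.Quotient.eq_zero_iff_mem.2 (coeff_zero_mem_jacobianIdeal hc)
  rwa [map_sum, map_sum, Finset.sum_congr rfl fun i _ => by rw [coeff_smul_C]] at this

theorem linearIndependent_mkQ_C [Fintype ι] (hD : ∀ i j x, D i (D j x) = D j (D i x))
    (hf : OnlyKoszulSyzygies fun j => D j f)
    (hb : LinearIndependent K fun i => Ideal.Quotient.mk (jacobianIdeal D f) (b i)) :
    LinearIndependent K⟦X⟧ fun i => (brieskornSubmodule D f).mkQ (C (b i)) := by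
  suffices ∀ k (t : Finset κ) (c : κ → K⟦X⟧), ∑ i ∈ t, c i • C (b i) ∈ brieskornSubmodule D f →
      ∀ i ∈ t, coeff k (c i) = 0 by
    refine linearIndependent_iff'.2 fun t c hc i hi =>
      PowerSeries.ext fun k => this k t c ?_ i hi
    rw [← Submodule.ker_mkQ (brieskornSubmodule D f), LinearMap.mem_ker, map_sum]
    simpa only [map_smul] using hc
  intro k t
  induction k with
  | zero => exact fun c hc => coeff_zero_eq_zero_of_sum_smul_C_mem hb hc
  | succ k ih =>
    intro c hc i hi
    let c' (i : κ) : K⟦X⟧ := PowerSeries.mk fun k => coeff (k + 1) (c i)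
    have hc' : ∀ i ∈ t, c i = X * c' i := fun i hi => by
      conv_lhs => rw [eq_X_mul_shift_add_const (c i), ← coeff_zero_eq_constantCoeff_apply,
        coeff_zero_eq_zero_of_sum_smul_C_mem hb hc i hi, map_zero, add_zero]
    rw [hc' i hi, coeff_succ_X_mul]
    refine ih c' (mem_brieskornSubmodule_of_X_smul_mem hD hf ?_) i hi
    rw [Finset.sum_congr rfl fun i hi => by rw [hc' i hi]] at hc
    simpa only [Finset.smul_sum, smul_smul] using hc

theorem exists_sum_smul_add_sum_mul_eq [Fintype ι] [Fintype κ]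
    (hb : Submodule.span K (Set.range fun i => Ideal.Quotient.mk (jacobianIdeal D f) (b i)) = ⊤)
    (z : R) : ∃ (c : κ → K) (q : ι → R), ∑ i, c i • b i + ∑ j, D j f * q j = z := by
  obtain ⟨c, hc⟩ := (Submodule.mem_span_range_iff_exists_fun K).1 <|
    hb.symm ▸ Submodule.mem_top (x := Ideal.Quotient.mk (jacobianIdeal D f) z)
  have sub_mem : z - ∑ i, c i • b i ∈ jacobianIdeal D f := by
    rw [← Ideal.Quotient.eq, map_sum, ← hc]
    rfl
  obtain ⟨q, hq⟩ := Ideal.mem_span_range_iff_exists_fun.1 sub_mem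
  exact ⟨c, q, by simp_rw [mul_comm, hq, add_sub_cancel]⟩

theorem exists_sub_sum_smul_C_mem [Finite ι] [Fintype κ]
    (hb : Submodule.span K (Set.range fun i => Ideal.Quotient.mk (jacobianIdeal D f) (b i)) = ⊤)
    (p : R⟦X⟧) : ∃ c : κ → K⟦X⟧, p - ∑ i, c i • C (b i) ∈ brieskornSubmodule D f := by
  have := Fintype.ofFinite ι
  choose c q hcq using exists_sum_smul_add_sum_mul_eq hb
  -- Subtracting `F_j (q_j X ^ k)` carries `D_j q_j` over to the coefficient of `X ^ (k + 1)`.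
  let z : ℕ → R := Nat.rec (coeff 0 p) fun k zk => coeff (k + 1) p + ∑ j, D j (q zk j)
  have z_zero : z 0 = coeff 0 p := rfl
  have z_succ (k : ℕ) : z (k + 1) = coeff (k + 1) p + ∑ j, D j (q (z k) j) := rfl
  refine ⟨fun i => PowerSeries.mk fun k => c (z k) i, mem_brieskornSubmodule_iff.2
    ⟨fun j => PowerSeries.mk fun k => q (z k) j, eq_sub_of_add_eq' ?_⟩⟩
  ext (_ | k)
  · simp only [map_add, map_sum, coeff_smul_C, coeff_mk, coeff_zero_twistedDeriv, hcq, z_zero]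
  · simp only [map_add, map_sum, coeff_smul_C, coeff_mk, coeff_succ_twistedDeriv,
      Finset.sum_sub_distrib, ← add_sub_assoc, hcq]
    rw [z_succ, add_sub_cancel_right]

theorem span_mkQ_C_eq_top [Finite ι] [Finite κ]
    (hb : Submodule.span K (Set.range fun i => Ideal.Quotient.mk (jacobianIdeal D f) (b i)) = ⊤) :
    Submodule.span K⟦X⟧ (Set.range fun i => (brieskornSubmodule D f).mkQ (C (b i))) = ⊤ := by
  have := Fintype.ofFinite κ
  refine eq_top_iff.2 fun y _ => ?_
  obtain ⟨p, rfl⟩ := Submodule.mkQ_surjective _ y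
  obtain ⟨c, hc⟩ := exists_sub_sum_smul_C_mem hb p
  refine (Submodule.mem_span_range_iff_exists_fun _).2 ⟨c, ?_⟩
  simp_rw [← map_smul, ← map_sum]
  exact ((Submodule.Quotient.eq _).2 hc).symm

theorem nonempty_basis_brieskornLattice [Fintype ι] [Finite κ]
    (hD : ∀ i j x, D i (D j x) = D j (D i x)) (hf : OnlyKoszulSyzygies fun j => D j f)
    (B : Module.Basis κ K (R ⧸ jacobianIdeal D f)) :
    Nonempty (Module.Basis κ K⟦X⟧ (BrieskornLattice D f)) := by
  choose b hb using fun i => Ideal.Quotient.mk_surjective (B i)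
  have mk_b : (fun i => Ideal.Quotient.mk (jacobianIdeal D f) (b i)) = B := funext hb
  exact ⟨.mk (linearIndependent_mkQ_C hD hf (mk_b ▸ B.linearIndependent))
    (span_mkQ_C_eq_top (mk_b ▸ B.span_eq)).ge⟩

end BrieskornLattice

section FormalPowerSeries

open PowerSeries
open MvPowerSeries (pderiv finSuccEquiv coeff_coeff_finSuccEquiv)

theorem brieskorn_free_general {σ K : Type*} [Finite σ] [CommRing K] [Nontrivial K]
    (f : MvPowerSeries σ K)
    (hf : ∀ i, MvPowerSeries.X i ∈ (jacobianIdeal (pderiv K) f).radical)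
    [Module.Free K (MvPowerSeries σ K ⧸ jacobianIdeal (pderiv K) f)] :
    Nonempty (Module.Basis
      (Fin (Module.finrank K (MvPowerSeries σ K ⧸ jacobianIdeal (pderiv K) f)))
      K⟦X⟧ (BrieskornLattice (pderiv K) f)) := by
  have := Fintype.ofFinite σ
  have := finite_quotient_of_X_mem_radical hf
  exact nonempty_basis_brieskornLattice pderiv_comm (onlyKoszulSyzygies_of_X_mem_radical hf)
    (Module.finBasis K _)

variable {n}

theorem pd_eq_pderiv {σ : Type*} (i : σ) (g : MvPowerSeries σ ℂ) : pd i g = pderiv ℂ i g := by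
  ext α
  rw [coeff_pd, MvPowerSeries.coeff_pderiv, mul_comm]

theorem Jf_eq_jacobianIdeal (f : R' n) : Jf n f = jacobianIdeal (pderiv ℂ) f := by
  simp only [Jf, jacobianIdeal, pd_eq_pderiv]

theorem tailF_cons (k : ℕ) (α : Fin n →₀ ℕ) : tailF n (α.cons k) = α := by
  ext i
  simp [tailF]

theorem finSuccEquiv_sv : finSuccEquiv ℂ n (sv n) = X :=
  MvPowerSeries.finSuccEquiv_X_zero ..

theorem finSuccEquiv_inclR (g : R' n) : finSuccEquiv ℂ n (inclR n g) = C g := by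
  ext k α
  simp only [coeff_coeff_finSuccEquiv, Finsupp.cons_zero, coeff_inclR, tailF_cons, coeff_C]
  split <;> simp

theorem finSuccEquiv_toA (c : ℂ⟦X⟧) :
    finSuccEquiv ℂ n (toA n c) = algebraMap ℂ⟦X⟧ (R' n)⟦X⟧ c := by
  classical
  ext k α
  have coeff_toA : MvPowerSeries.coeff (α.cons k) (toA n c) =
      if tailF n (α.cons k) = 0 then coeff (α.cons k 0) c else 0 := rfl
  simp [coeff_coeff_finSuccEquiv, coeff_toA, tailF_cons, algebraMap_apply'',
    MvPowerSeries.algebraMap_apply, MvPowerSeries.coeff_C]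

theorem finSuccEquiv_pd_succ (i : Fin n) (g : A' n) :
    finSuccEquiv ℂ n (pd i.succ g) =
      coeffwise (pderiv ℂ i : R' n →ₗ[ℂ] R' n) (finSuccEquiv ℂ n g) := by
  ext k α
  have cons_add_single : α.cons k + Finsupp.single i.succ 1 = (α + Finsupp.single i 1).cons k := by
    ext j
    refine Fin.cases ?_ (fun j => ?_) j <;> simp [Finsupp.single_apply]
  simp [coeff_coeff_finSuccEquiv, coeff_pd, MvPowerSeries.coeff_pderiv, cons_add_single, mul_comm]

theorem finSuccEquiv_FF (f : R' n) (i : Fin n) (g : A' n) :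
    finSuccEquiv ℂ n (FF n f i g) = twistedDeriv (pderiv ℂ i) f (finSuccEquiv ℂ n g) := by
  rw [FF, map_sub, map_mul, map_mul, finSuccEquiv_inclR, finSuccEquiv_sv, finSuccEquiv_pd_succ,
    pd_eq_pderiv, twistedDeriv_apply]

theorem mem_Mset_iff (f : R' n) (a : A' n) :
    a ∈ Mset n f ↔ finSuccEquiv ℂ n a ∈ brieskornSubmodule (pderiv ℂ) f := by
  rw [mem_brieskornSubmodule_iff, (finSuccEquiv ℂ n).surjective.comp_left.exists]
  simp [Mset, ← finSuccEquiv_FF, ← map_sum, eq_comm]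

theorem exists_basis_mod_Mset {κ : Type*} [Fintype κ] {f : R' n}
    (B : Module.Basis κ ℂ⟦X⟧ (BrieskornLattice (pderiv ℂ) f)) :
    ∃ b : κ → A' n, ∀ p : A' n, ∃! c : κ → ℂ⟦X⟧, p - ∑ i, toA n (c i) * b i ∈ Mset n f := by
  let e := finSuccEquiv ℂ n
  choose b hb using fun i => Submodule.mkQ_surjective (brieskornSubmodule (pderiv ℂ) f) (B i)
  refine ⟨fun i => e.symm (b i), fun p => ?_⟩
  have e_sub (c : κ → ℂ⟦X⟧) :
      e (p - ∑ i, toA n (c i) * e.symm (b i)) = e p - ∑ i, c i • b i := by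
    simp [e, finSuccEquiv_toA, Algebra.smul_def]
  have mem_iff (c : κ → ℂ⟦X⟧) : p - ∑ i, toA n (c i) * e.symm (b i) ∈ Mset n f ↔
      B.equivFun ((brieskornSubmodule (pderiv ℂ) f).mkQ (e p)) = c := by
    rw [mem_Mset_iff, e_sub, ← Submodule.Quotient.mk_eq_zero, ← Submodule.mkQ_apply, map_sub,
      sub_eq_zero, ← LinearEquiv.eq_symm_apply, Module.Basis.equivFun_symm_apply]
    simp only [map_sum, map_smul, hb]
  simp [mem_iff]

end FormalPowerSeries

/-- **Proposition 21 (freeness of the formal Brieskorn lattice)**: the formal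
Brieskorn lattice `H = A/M` is a free `ℂ[[s]]`-module of rank `μ`, where
`μ = dim_ℂ (R/J(f))` is the Milnor number: there are `μ` elements of `A` whose
classes form a `ℂ[[s]]`-basis of `H`, i.e. every element of `A` is congruent
modulo `M` to a unique `ℂ[[s]]`-linear combination of them. -/
theorem brieskorn_free (n : ℕ) (hn : 1 ≤ n) (f : R' n)
    (hf0 : MvPowerSeries.constantCoeff f = 0)
    (m : ℕ) (hm : 1 ≤ m) (hiso : mx n ^ m ≤ Jf n f) :
    ∃ b : Fin (Module.finrank ℂ (R' n ⧸ Jf n f)) → A' n,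
      ∀ p : A' n,
        ∃! c : Fin (Module.finrank ℂ (R' n ⧸ Jf n f)) → PowerSeries ℂ,
          p - ∑ i, toA n (c i) * b i ∈ Mset n f := by
  have hf (i : Fin n) : MvPowerSeries.X i ∈ (jacobianIdeal (MvPowerSeries.pderiv ℂ) f).radical := by
    rw [← Jf_eq_jacobianIdeal]
    exact ⟨m, hiso (Ideal.pow_mem_pow (Ideal.subset_span (Set.mem_range_self i)) m)⟩
  obtain ⟨B⟩ := brieskorn_free_general f hf
  exact Jf_eq_jacobianIdeal f ▸ exists_basis_mod_Mset B
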